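/- Suppose W is completely p-reductive with respect to a non-coordinate α ∈ A¹. Then every β ∈ A¹ satisfying the resonance condition for (α,β) at every branch δ ∈ Δ_P of every point P ∈ S — in particular, every β with β∧α = 0 in A²_{W,k} — is a scalar multiple of α. Consequently ker(·∧α : A¹ → A²) = k·α and H¹(A*_{W,k},·∧α) = 0. -/

import Mathlib

/-!
For non-coordinate `α`, consider the ratios `β_c / α_c`. Each reduction step keeps them constant on
the fibres of the current surjection: at a transversal point the branches fall in two fibres, and the
resonance condition at the distinguished branch `δ` becomes `α_{φ(δ)} · (λ₀ - λ₁) · M = 0`, where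
`λ₀`, `λ₁` are the two ratios and `M` is the sum that transversality requires to be nonzero
(`ratio_eq_of_pTransversalAt`). At the end of a complete reduction all ratios agree, so `β` is a
multiple of `α`.

If `β ∧ α = 0`, the resonance conditions follow by applying to the `P`-component, for each branch
`δ`, the linear form `x ∧ y ↦ x_δ · Σ y - y_δ · Σ x` on `Λ² A_P`. This form vanishes on the
three-term relations, hence on `I_P` unless all branches at `P` lie on one component; in that case
all multiplicities entering the resonance condition are zero
(`resCond_of_wedge_eq_zero`). The kernel is then exactly `k·α` because `α ∧ α = 0` (`wedge_self`).
-/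

open scoped Classical

/-- The weak combinatorial type of a plane projective curve. -/
structure WeakComb (p : ℕ) where
  /-- the set of irreducible components -/
  C : Type
  [fintypeC : Fintype C]
  [decEqC : DecidableEq C]
  [nonemptyC : Nonempty C]
  /-- the set of singular points -/
  S : Type
  [fintypeS : Fintype S]
  [decEqS : DecidableEq S]
  /-- the local branches at each singular point -/
  Δ : S → Type
  [fintypeΔ : ∀ P, Fintype (Δ P)]
  [decEqΔ : ∀ P, DecidableEq (Δ P)]
  /-- each branch belongs to a component -/
  φ : ∀ P, Δ P → C
  /-- local intersection multiplicities of pairs of branches -/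
  μ : ∀ P, Δ P → Δ P → ℕ
  μ_symm : ∀ P δ δ', φ P δ ≠ φ P δ' → μ P δ δ' = μ P δ' δ
  μ_pos : ∀ P δ δ', φ P δ ≠ φ P δ' → 0 < μ P δ δ'

attribute [instance] WeakComb.fintypeC WeakComb.decEqC WeakComb.nonemptyC
attribute [instance] WeakComb.fintypeS WeakComb.decEqS WeakComb.fintypeΔ WeakComb.decEqΔ

namespace WeakComb

variable {p : ℕ} (W : WeakComb p)

/-- μ_P(δ,δ') with the convention that it vanishes on pairs of branches of the same component. -/
def muk (P : W.S) (δ δ' : W.Δ P) : ℕ :=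
  if W.φ P δ = W.φ P δ' then 0 else W.μ P δ δ'

/-- μ_P(δ, j): the multiplicity of intersection of the branch δ with the component j. -/
def muC (P : W.S) (δ : W.Δ P) (j : W.C) : ℕ :=
  ∑ δ' : W.Δ P, if W.φ P δ' = j then W.muk P δ δ' else 0

/-- A degree assignment: positive degrees satisfying the Bezout condition. -/
def IsDegree (d : W.C → ℕ) : Prop :=
  (∀ i, 0 < d i) ∧
  ∀ i j, i ≠ j →
    d i * d j = ∑ P : W.S, ∑ δ : W.Δ P, if W.φ P δ = i then W.muC P δ j else 0

/-- The basis vector σ_i of A¹ = (C → ZMod p). -/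
noncomputable def sigma (i : W.C) : W.C → ZMod p := Pi.single i 1

/-- The basis vector ψ_P^δ of A_P = (Δ_P → ZMod p). -/
noncomputable def psi (P : W.S) (δ : W.Δ P) : W.Δ P → ZMod p := Pi.single δ 1

/-- ψ_P^δ ∧ ψ_P^δ' as an element of Λ² A_P. -/
noncomputable def psiW (P : W.S) (δ δ' : W.Δ P) : ⋀[ZMod p]^2 (W.Δ P → ZMod p) :=
  ⟨ExteriorAlgebra.ιMulti (ZMod p) 2 ![W.psi P δ, W.psi P δ'],
   ExteriorAlgebra.ιMulti_range (ZMod p) 2 (Set.mem_range_self _)⟩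

/-- The subspace I_P of Λ² A_P. -/
noncomputable def IP (P : W.S) : Submodule (ZMod p) (⋀[ZMod p]^2 (W.Δ P → ZMod p)) :=
  Submodule.span (ZMod p)
    ({x | ∃ δ1 δ2 δ3 : W.Δ P, x = W.psiW P δ1 δ2 + W.psiW P δ2 δ3 + W.psiW P δ3 δ1} ∪
     {x | (∀ δ δ' : W.Δ P, W.φ P δ = W.φ P δ') ∧ ∃ δ1 δ2 : W.Δ P, x = W.psiW P δ1 δ2})

/-- The degree-two part A² = A^{2,0} ⊕ A^{2,∞} of the Combinatorial Aomoto algebra. -/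
abbrev A2 (d : W.C → ℕ) : Type :=
  ((P : W.S) → (⋀[ZMod p]^2 (W.Δ P → ZMod p)) ⧸ W.IP P) ×
  ({i : W.C // p ∣ d i} → ZMod p)

/-- The wedge product A¹ × A¹ → A², extending σ_i ∧ σ_j bilinearly. -/
noncomputable def wedge (d : W.C → ℕ) (α β : W.C → ZMod p) : W.A2 d :=
  (fun P => ∑ δ : W.Δ P, ∑ δ' : W.Δ P,
      (α (W.φ P δ) * β (W.φ P δ') * (W.muk P δ δ' : ZMod p)) •
        Submodule.Quotient.mk (W.psiW P δ δ'),
   fun i => α i.1 * (∑ j : W.C, (d j : ZMod p) * β j)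
          - β i.1 * (∑ j : W.C, (d j : ZMod p) * α j))

/-- The linear map ·∧α : A¹ → A², β ↦ β ∧ α. -/
noncomputable def wedgeL (d : W.C → ℕ) (α : W.C → ZMod p) :
    (W.C → ZMod p) →ₗ[ZMod p] W.A2 d where
  toFun β := W.wedge d β α
  map_add' β γ := by
    refine Prod.ext ?_ ?_
    · funext P
      simp only [wedge, Pi.add_apply, Prod.fst_add]
      rw [← Finset.sum_add_distrib]
      refine Finset.sum_congr rfl fun δ _ => ?_
      rw [← Finset.sum_add_distrib]
      refine Finset.sum_congr rfl fun δ' _ => ?_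
      rw [← add_smul, add_mul, add_mul]
    · funext i
      simp only [wedge, Pi.add_apply, Prod.snd_add]
      rw [show (∑ x : W.C, (d x : ZMod p) * (β x + γ x))
            = (∑ x : W.C, (d x : ZMod p) * β x) + ∑ x : W.C, (d x : ZMod p) * γ x by
        rw [← Finset.sum_add_distrib]; exact Finset.sum_congr rfl fun x _ => by ring]
      ring
  map_smul' c β := by
    refine Prod.ext ?_ ?_
    · funext P
      simp only [wedge, Pi.smul_apply, smul_eq_mul, RingHom.id_apply, Prod.smul_fst]
      rw [Finset.smul_sum]
      refine Finset.sum_congr rfl fun δ _ => ?_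
      rw [Finset.smul_sum]
      refine Finset.sum_congr rfl fun δ' _ => ?_
      rw [smul_smul]
      ring_nf
    · funext i
      simp only [wedge, Pi.smul_apply, smul_eq_mul, RingHom.id_apply, Prod.smul_snd]
      rw [show (∑ x : W.C, (d x : ZMod p) * (c * β x)) = c * ∑ x : W.C, (d x : ZMod p) * β x by
        rw [Finset.mul_sum]; exact Finset.sum_congr rfl fun x _ => by ring]
      ring

/-- The kernel of ·∧α : A¹ → A². -/
noncomputable def wedgeKer (d : W.C → ℕ) (α : W.C → ZMod p) :
    Submodule (ZMod p) (W.C → ZMod p) :=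
  LinearMap.ker (W.wedgeL d α)

/-- H¹ of the Combinatorial Aomoto complex with differential ·∧α. -/
noncomputable abbrev H1 (d : W.C → ℕ) (α : W.C → ZMod p) :=
  (W.wedgeKer d α) ⧸
    (Submodule.comap (W.wedgeKer d α).subtype (Submodule.span (ZMod p) {α}))

end WeakComb

namespace WeakComb

variable {p : ℕ} (W : WeakComb p)

/-- The resonance condition for (α,β) at the branch δ of the point P. -/
def ResCond (α β : W.C → ZMod p) (P : W.S) (δ : W.Δ P) : Prop :=
  β (W.φ P δ) * (∑ j : W.C, (W.muC P δ j : ZMod p) * α j)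
    - α (W.φ P δ) * (∑ j : W.C, (W.muC P δ j : ZMod p) * β j) = 0

/-- P is a p-transversal point for the pair of components i ≠ j. -/
def PTransPoint (P : W.S) (i j : W.C) : Prop :=
  i ≠ j ∧ (∀ δ : W.Δ P, W.φ P δ = i ∨ W.φ P δ = j) ∧
  (∃ δ : W.Δ P, W.φ P δ = i) ∧ (∃ δ : W.Δ P, W.φ P δ = j) ∧
  ((∃ δ : W.Δ P, W.φ P δ = i ∧ ((W.muC P δ j : ZMod p) ≠ 0)) ∨
   (∃ δ : W.Δ P, W.φ P δ = j ∧ ((W.muC P δ i : ZMod p) ≠ 0)))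

/-- The components i and j are p-transversal at a point. -/
def PTransComponents (i j : W.C) : Prop := ∃ P : W.S, W.PTransPoint P i j

/-- α is non-coordinate if all its coordinates are nonzero. -/
def NonCoordinate (α : W.C → ZMod p) : Prop := ∀ i, α i ≠ 0

end WeakComb

/-- The setoid (partition) obtained from s by merging the classes of c₀ and c₁. -/
def mergeSetoid {α : Type*} (s : Setoid α) (c₀ c₁ : α) : Setoid α :=
  Relation.EqvGen.setoid (fun a b => s.r a b ∨ (a = c₀ ∧ b = c₁))

namespace WeakComb

variable {p : ℕ} (W : WeakComb p)

/-- W is p-transversal at P with respect to (α, π), where the surjection π is encoded by the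
setoid s of its fibres; the two classes π(φ_P(Δ_P)) = {i',j'} are those of c₀ and c₁. -/
def PTransversalAt (α : W.C → ZMod p) (s : Setoid W.C) (P : W.S) (c₀ c₁ : W.C) : Prop :=
  ¬ s.r c₀ c₁ ∧
  (∀ δ : W.Δ P, s.r (W.φ P δ) c₀ ∨ s.r (W.φ P δ) c₁) ∧
  (∃ δ : W.Δ P, s.r (W.φ P δ) c₀) ∧ (∃ δ : W.Δ P, s.r (W.φ P δ) c₁) ∧
  ∃ δ : W.Δ P, s.r (W.φ P δ) c₀ ∧
    (∑ δ' : W.Δ P, if s.r (W.φ P δ') c₁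
        then (W.muk P δ δ' : ZMod p) * α (W.φ P δ') else 0) ≠ 0

/-- A p-reduction step with respect to α. -/
def RedStep (α : W.C → ZMod p) (s s' : Setoid W.C) : Prop :=
  ∃ (P : W.S) (c₀ c₁ : W.C), W.PTransversalAt α s P c₀ c₁ ∧ s' = mergeSetoid s c₀ c₁

/-- W is completely p-reductive with respect to α: starting from the identity partition (⊥),
some finite sequence of p-reduction steps reaches the one-class partition (⊤). -/
def CompletelyPReductive (α : W.C → ZMod p) : Prop :=
  Relation.ReflTransGen (W.RedStep α) ⊥ ⊤

/-- β is π-proportional to α, for the surjection π encoded by the setoid s: on each class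
of s, β is a scalar multiple of α. -/
def Proportional (s : Setoid W.C) (α β : W.C → ZMod p) : Prop :=
  ∀ c : W.C, ∃ l : ZMod p, ∀ c', s.r c c' → β c' = l * α c'

end WeakComb

/-- A combinatorial quasi-fiber structure of rank r on W. -/
structure QuasiFiber {p : ℕ} (W : WeakComb p) (r : ℕ) where
  /-- which quasi-fiber each component belongs to -/
  g : W.C → Fin r
  g_surj : Function.Surjective g
  /-- multiplicities of components inside the quasi-fibers -/
  m : W.C → ℕ
  m_pos : ∀ c, 0 < m c
  /-- the set of base points -/
  B : Set W.S
  fiber_off_base : ∀ P : W.S, P ∉ B → ∀ δ δ' : W.Δ P, g (W.φ P δ) = g (W.φ P δ')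

namespace WeakComb

variable {p : ℕ} (W : WeakComb p) {r : ℕ}

/-- M_s(δ) for a branch δ at a base point P. -/
noncomputable def Mcoef (F : QuasiFiber W r) (P : W.S) (δ : W.Δ P) (s : Fin r) : ZMod p :=
  ∑ δ' : W.Δ P,
    if W.φ P δ' ≠ W.φ P δ ∧ F.g (W.φ P δ') = s
      then ((F.m (W.φ P δ') * W.μ P δ δ' : ℕ) : ZMod p) else 0

/-- ω_a = Σ_c m_c · a_{g(c)} · σ_c ∈ A¹. -/
noncomputable def omega (F : QuasiFiber W r) (a : Fin r → ZMod p) : W.C → ZMod p :=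
  fun c => (F.m c : ZMod p) * a (F.g c)

/-- The restricted combinatorics W°_s of the quasi-fiber s. -/
noncomputable def restrict (F : QuasiFiber W r) (s : Fin r) : WeakComb p where
  C := {c : W.C // F.g c = s}
  fintypeC := Fintype.ofFinite _
  decEqC := inferInstance
  nonemptyC := by obtain ⟨c, hc⟩ := F.g_surj s; exact ⟨⟨c, hc⟩⟩
  S := {P : W.S // Nonempty (W.Δ P) ∧ ∀ δ : W.Δ P, F.g (W.φ P δ) = s}
  fintypeS := Fintype.ofFinite _
  decEqS := inferInstance
  Δ := fun P => W.Δ P.1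
  fintypeΔ := fun P => inferInstance
  decEqΔ := fun P => inferInstance
  φ := fun P δ => ⟨W.φ P.1 δ, P.2.2 δ⟩
  μ := fun P δ δ' => W.μ P.1 δ δ'
  μ_symm := fun P δ δ' h => W.μ_symm P.1 δ δ' (fun e => h (Subtype.ext e))
  μ_pos := fun P δ δ' h => W.μ_pos P.1 δ δ' (fun e => h (Subtype.ext e))

/-- The restriction ω_a|_s of ω_a to the restricted combinatorics W°_s. -/
noncomputable def omegaRes (F : QuasiFiber W r) (a : Fin r → ZMod p) (s : Fin r) :
    (W.restrict F s).C → ZMod p :=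
  fun c => (F.m c.1 : ZMod p) * a s

end WeakComb

namespace WeakComb

variable {p : ℕ} (W : WeakComb p)

theorem sum_muC_mul (α : W.C → ZMod p) (P : W.S) (δ : W.Δ P) :
    ∑ j : W.C, (W.muC P δ j : ZMod p) * α j
      = ∑ δ' : W.Δ P, (W.muk P δ δ' : ZMod p) * α (W.φ P δ') := by
  simp only [muC, Nat.cast_sum, Finset.sum_mul]
  rw [Finset.sum_comm]
  refine Finset.sum_congr rfl fun δ' _ => ?_
  rw [Finset.sum_eq_single (W.φ P δ')]
  · simp
  · intro j _ hj
    simp [hj.symm]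
  · simp

theorem muk_symm (P : W.S) (δ δ' : W.Δ P) : W.muk P δ δ' = W.muk P δ' δ := by
  unfold muk
  by_cases h : W.φ P δ = W.φ P δ'
  · simp [h]
  · rw [if_neg h, if_neg (Ne.symm h), W.μ_symm P δ δ' h]

theorem psiW_swap (P : W.S) (δ δ' : W.Δ P) : W.psiW P δ δ' + W.psiW P δ' δ = 0 := by
  apply Subtype.ext
  simp [psiW, ExteriorAlgebra.ιMulti_apply, ExteriorAlgebra.ι_add_mul_swap]

theorem psiW_self (P : W.S) (δ : W.Δ P) : W.psiW P δ δ = 0 := by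
  apply Subtype.ext
  simp [psiW, ExteriorAlgebra.ιMulti_apply]

/-- The linear form on `Λ² A_P` sending `x ∧ y` to `x_δ · Σ y - y_δ · Σ x`, the determinant of the
values of `x` and `y` under the coordinate `δ` and the sum of all coordinates. -/
noncomputable def branchForm (P : W.S) (δ : W.Δ P) :
    ⋀[ZMod p]^2 (W.Δ P → ZMod p) →ₗ[ZMod p] ZMod p :=
  exteriorPower.alternatingMapLinearEquiv
    ((Matrix.detRowAlternating (n := Fin 2) (R := ZMod p)).compLinearMap
      (LinearMap.pi ![LinearMap.proj δ, ∑ ε : W.Δ P, LinearMap.proj ε]))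

theorem branchForm_psiW (P : W.S) (δ δ₁ δ₂ : W.Δ P) :
    W.branchForm P δ (W.psiW P δ₁ δ₂)
      = (if δ₁ = δ then 1 else 0) - (if δ₂ = δ then 1 else 0) := by
  have h : W.psiW P δ₁ δ₂ = exteriorPower.ιMulti (ZMod p) 2 ![W.psi P δ₁, W.psi P δ₂] := rfl
  rw [h, branchForm, exteriorPower.alternatingMapLinearEquiv_apply_ιMulti,
    AlternatingMap.compLinearMap_apply]
  refine (Matrix.det_fin_two _).trans ?_
  simp [psi, Pi.single_apply, eq_comm]

/-- If not all branches at `P` lie on one component, `I_P` is spanned by the three-term relations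
alone, and `branchForm` kills each of them by telescoping. -/
theorem branchForm_eq_zero_of_mem_IP (P : W.S) (δ : W.Δ P)
    (hP : ¬ ∀ δ₁ δ₂ : W.Δ P, W.φ P δ₁ = W.φ P δ₂)
    {x : ⋀[ZMod p]^2 (W.Δ P → ZMod p)} (hx : x ∈ W.IP P) : W.branchForm P δ x = 0 := by
  have hle : W.IP P ≤ LinearMap.ker (W.branchForm P δ) := by
    refine Submodule.span_le.2 ?_
    rintro _ (⟨δ₁, δ₂, δ₃, rfl⟩ | ⟨h, _⟩)
    · simp only [SetLike.mem_coe, LinearMap.mem_ker, map_add, branchForm_psiW]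
      ring
    · exact absurd h hP
  exact hle hx

/-- The `P`-component of `β ∧ α`, evaluated under `branchForm P δ`, is the resonance expression
at `δ`. -/
theorem resCond_of_wedge_eq_zero (d : W.C → ℕ) (α β : W.C → ZMod p)
    (h : W.wedge d β α = 0) (P : W.S) (δ : W.Δ P) : W.ResCond α β P δ := by
  unfold ResCond
  rw [sum_muC_mul, sum_muC_mul]
  -- When all branches at `P` lie on one component, every multiplicity at `P` vanishes and the
  -- condition is trivial.
  by_cases hP : ∀ δ₁ δ₂ : W.Δ P, W.φ P δ₁ = W.φ P δ₂
  · have h0 : ∀ δ', W.muk P δ δ' = 0 := fun δ' => by simp [muk, hP δ δ']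
    simp [h0]
  · have h1 := congrFun (congrArg Prod.fst h) P
    have hmem : (∑ δ₁ : W.Δ P, ∑ δ₂ : W.Δ P,
        (β (W.φ P δ₁) * α (W.φ P δ₂) * (W.muk P δ₁ δ₂ : ZMod p)) • W.psiW P δ₁ δ₂)
          ∈ W.IP P := by
      rw [← Submodule.Quotient.mk_eq_zero, ← Submodule.mkQ_apply]
      simp only [map_sum, map_smul, Submodule.mkQ_apply]
      exact h1
    have h2 := W.branchForm_eq_zero_of_mem_IP P δ hP hmem
    simp only [map_sum, map_smul, branchForm_psiW, smul_eq_mul, mul_sub,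
      Finset.sum_sub_distrib, mul_ite, mul_one, mul_zero] at h2
    rw [Finset.sum_comm] at h2
    simp only [Finset.sum_ite_eq', Finset.mem_univ, if_true] at h2
    rw [Finset.mul_sum, Finset.mul_sum, ← h2]
    congr 1
    · exact Finset.sum_congr rfl fun δ' _ => by ring
    · exact Finset.sum_congr rfl fun δ' _ => by rw [W.muk_symm P δ δ']; ring

theorem wedge_self (d : W.C → ℕ) (α : W.C → ZMod p) : W.wedge d α α = 0 := by
  refine Prod.ext ?_ ?_
  · funext P
    have h : (∑ δ : W.Δ P, ∑ δ' : W.Δ P,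
        (α (W.φ P δ) * α (W.φ P δ') * (W.muk P δ δ' : ZMod p)) • W.psiW P δ δ') = 0 := by
      rw [← Finset.sum_product']
      -- The terms of `(δ, δ')` and `(δ', δ)` cancel and the diagonal terms vanish; this pairing
      -- avoids dividing by `2` and so covers `p = 2`.
      refine Finset.sum_involution (fun x _ => x.swap) ?_ ?_ ?_ ?_
      · rintro ⟨δ, δ'⟩ _
        simp only [Prod.swap]
        rw [W.muk_symm P δ' δ, mul_comm (α (W.φ P δ')), ← smul_add, psiW_swap, smul_zero]
      · rintro ⟨δ, δ'⟩ _ hne heq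
        obtain rfl : δ' = δ := congrArg Prod.fst heq
        exact hne (by simp [psiW_self])
      · simp
      · simp
    have h1 := congrArg (W.IP P).mkQ h
    simp only [map_sum, map_smul, Submodule.mkQ_apply, map_zero] at h1
    exact h1
  · funext i
    simp [wedge]

/-- If the ratios `β_c / α_c` are constant on the classes of `s`, then resonance at a transversal
branch forces the ratios on the two classes meeting there to agree. -/
theorem ratio_eq_of_pTransversalAt [Fact p.Prime] {α β : W.C → ZMod p}
    (hnc : W.NonCoordinate α) (hres : ∀ (P : W.S) (δ : W.Δ P), W.ResCond α β P δ)
    {s : Setoid W.C} (hs : s ≤ Setoid.ker fun c => β c / α c)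
    {P : W.S} {c₀ c₁ : W.C} (h : W.PTransversalAt α s P c₀ c₁) :
    β c₀ / α c₀ = β c₁ / α c₁ := by
  obtain ⟨h01, hcov, -, -, δ, hδ, hsum⟩ := h
  have hratio : ∀ {a b}, s.r a b → β a / α a = β b / α b := fun hab => hs hab
  have hβ : ∀ c, β c = β c / α c * α c := fun c => (div_mul_cancel₀ _ (hnc c)).symm
  have hr := hres P δ
  unfold ResCond at hr
  rw [sum_muC_mul, sum_muC_mul] at hr
  have key : α (W.φ P δ) * ((β c₀ / α c₀ - β c₁ / α c₁) *
      ∑ δ' : W.Δ P, if s.r (W.φ P δ') c₁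
        then (W.muk P δ δ' : ZMod p) * α (W.φ P δ') else 0) = 0 := by
    refine Eq.trans ?_ hr
    rw [Finset.mul_sum, Finset.mul_sum, Finset.mul_sum, Finset.mul_sum,
      ← Finset.sum_sub_distrib]
    refine Finset.sum_congr rfl fun δ' _ => ?_
    rw [hβ (W.φ P δ), hβ (W.φ P δ'), hratio hδ]
    rcases hcov δ' with h0 | h1
    · have hn : ¬ s.r (W.φ P δ') c₁ := fun h1 => h01 (s.trans (s.symm h0) h1)
      rw [if_neg hn, hratio h0]
      ring
    · rw [if_pos h1, hratio h1]
      ring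
  rcases mul_eq_zero.1 key with h | h
  · exact absurd h (hnc _)
  · exact sub_eq_zero.1 ((mul_eq_zero.1 h).resolve_right hsum)

theorem ratio_const_of_reduction [Fact p.Prime] {α β : W.C → ZMod p}
    (hnc : W.NonCoordinate α) (hres : ∀ (P : W.S) (δ : W.Δ P), W.ResCond α β P δ)
    {s : Setoid W.C} (h : Relation.ReflTransGen (W.RedStep α) ⊥ s) :
    s ≤ Setoid.ker fun c => β c / α c := by
  induction h with
  | refl => exact bot_le
  | tail _ hstep ih =>
    obtain ⟨P, c₀, c₁, hP, rfl⟩ := hstep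
    refine Setoid.eqvGen_le ?_
    rintro a b (hab | ⟨rfl, rfl⟩)
    · exact ih hab
    · exact W.ratio_eq_of_pTransversalAt hnc hres ih hP

end WeakComb

section Statements

open WeakComb

variable {p : ℕ} [Fact p.Prime]

/-- Proposition `completelypreductive`. -/
theorem stmt6 (W : WeakComb p) (d : W.C → ℕ) (hd : W.IsDegree d)
    (α : W.C → ZMod p) (hnc : W.NonCoordinate α)
    (hred : W.CompletelyPReductive α) :
    (∀ β : W.C → ZMod p,
      (∀ (P : W.S) (δ : W.Δ P), W.ResCond α β P δ) → ∃ c : ZMod p, β = c • α) ∧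
    (∀ β : W.C → ZMod p, W.wedge d β α = 0 → ∃ c : ZMod p, β = c • α) ∧
    LinearMap.ker (W.wedgeL d α) = Submodule.span (ZMod p) {α} ∧
    Subsingleton (W.H1 d α) := by
  have h1 : ∀ β : W.C → ZMod p,
      (∀ (P : W.S) (δ : W.Δ P), W.ResCond α β P δ) → ∃ c : ZMod p, β = c • α := by
    intro β hres
    obtain ⟨c₀⟩ := W.nonemptyC
    refine ⟨β c₀ / α c₀, funext fun c => ?_⟩
    have hc : β c / α c = β c₀ / α c₀ :=
      W.ratio_const_of_reduction hnc hres hred (x := c) (y := c₀) trivial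
    rw [Pi.smul_apply, smul_eq_mul, ← hc, div_mul_cancel₀ _ (hnc c)]
  have h2 : ∀ β : W.C → ZMod p, W.wedge d β α = 0 → ∃ c : ZMod p, β = c • α :=
    fun β hβ => h1 β (W.resCond_of_wedge_eq_zero d α β hβ)
  have h3 : LinearMap.ker (W.wedgeL d α) = Submodule.span (ZMod p) {α} := by
    apply le_antisymm
    · intro β hβ
      obtain ⟨c, rfl⟩ := h2 β hβ
      exact Submodule.smul_mem _ c (Submodule.mem_span_singleton_self α)
    · rw [Submodule.span_singleton_le_iff_mem]
      exact W.wedge_self d α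
  refine ⟨h1, h2, h3, ?_⟩
  rw [Submodule.Quotient.subsingleton_iff, Submodule.comap_subtype_eq_top]
  exact h3.le

end Statements
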